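/- Every set of five natural numbers contains a four-element subset that is a caterpillar. -/

import Mathlib

/-!
Every set with at most three elements is a caterpillar (`isCaterpillar_of_card_le_three`): both
parts of its splitting partition are nonempty, so one of them is a singleton and the other is
smaller.  Given `|S| = 5`, one part of the splitting partition of `S` has at least three elements
and the other is nonempty.  Let `T` consist of three elements of the first and one of the second.
Since `T` meets both parts, it splits at the same index as `S` (`splitIdx_eq_of_subset`), so its
splitting partition is a three-element set against a singleton.
-/

/-- The first splitting index `s(S)` of a finite set of naturals: the largest bit position
at which two elements of `S` differ (where `d(n)` is the set of bit positions of `n`). -/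
noncomputable def splitIdx (S : Finset ℕ) : ℕ :=
  sSup {i | ∃ x ∈ S, ∃ y ∈ S, Nat.testBit x i = true ∧ Nat.testBit y i = false}

/-- `S₀`: the elements of `S` whose bit at the first splitting index is `0`. -/
noncomputable def lowerPart (S : Finset ℕ) : Finset ℕ :=
  S.filter fun x => Nat.testBit x (splitIdx S) = false

/-- `S₁`: the elements of `S` whose bit at the first splitting index is `1`. -/
noncomputable def upperPart (S : Finset ℕ) : Finset ℕ :=
  S.filter fun x => Nat.testBit x (splitIdx S) = true

/-- The family of caterpillars: the empty set and singletons are caterpillars, and a set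
with at least two elements and splitting partition `(S₀ | S₁)` is a caterpillar iff one
of `S₀`, `S₁` is a singleton and the other is a caterpillar. -/
inductive IsCaterpillar : Finset ℕ → Prop where
  | small (S : Finset ℕ) : S.card ≤ 1 → IsCaterpillar S
  | left (S : Finset ℕ) : 2 ≤ S.card → (lowerPart S).card = 1 →
      IsCaterpillar (upperPart S) → IsCaterpillar S
  | right (S : Finset ℕ) : 2 ≤ S.card → (upperPart S).card = 1 →
      IsCaterpillar (lowerPart S) → IsCaterpillar S

/-- `δ(S) = { s({x,y}) : x, y ∈ S, x ≠ y }`. -/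
noncomputable def deltaSet (S : Finset ℕ) : Finset ℕ :=
  (Finset.powersetCard 2 S).image splitIdx

lemma upperPart_card_lt (S : Finset ℕ) (h : (lowerPart S).card = 1) :
    (upperPart S).card < S.card := by
  obtain ⟨x, hx⟩ := Finset.card_eq_one.mp h
  have hxl : x ∈ lowerPart S := by simp [hx]
  have hxS : x ∈ S := (Finset.mem_filter.mp hxl).1
  have hxb : Nat.testBit x (splitIdx S) = false := (Finset.mem_filter.mp hxl).2
  apply Finset.card_lt_card
  have hsub : upperPart S ⊆ S := Finset.filter_subset _ _
  rw [Finset.ssubset_iff_of_subset hsub]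
  exact ⟨x, hxS, by simp [upperPart, hxb]⟩

lemma lowerPart_card_lt (S : Finset ℕ) (h : (upperPart S).card = 1) :
    (lowerPart S).card < S.card := by
  obtain ⟨x, hx⟩ := Finset.card_eq_one.mp h
  have hxl : x ∈ upperPart S := by simp [hx]
  have hxS : x ∈ S := (Finset.mem_filter.mp hxl).1
  have hxb : Nat.testBit x (splitIdx S) = true := (Finset.mem_filter.mp hxl).2
  apply Finset.card_lt_card
  have hsub : lowerPart S ⊆ S := Finset.filter_subset _ _
  rw [Finset.ssubset_iff_of_subset hsub]
  exact ⟨x, hxS, by simp [lowerPart, hxb]⟩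

/-- The type `t(S)` of a (non-caterpillar) finite set, defined recursively via the
splitting partition `S = (S₀ | S₁)`: `t(S) = (|S₀|, |S₁|)` if `|S₀|, |S₁| ≥ 2`;
`t(S) = t(S₀)` if `|S₁| = 1`; `t(S) = t(S₁)` if `|S₀| = 1`. -/
noncomputable def typeOf (S : Finset ℕ) : ℕ × ℕ :=
  if h1 : (lowerPart S).card = 1 then typeOf (upperPart S)
  else if h2 : (upperPart S).card = 1 then typeOf (lowerPart S)
  else ((lowerPart S).card, (upperPart S).card)
termination_by S.card
decreasing_by
  · exact upperPart_card_lt S h1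
  · exact lowerPart_card_lt S h2

lemma bddAbove_splitting (S : Finset ℕ) :
    BddAbove {i | ∃ x ∈ S, ∃ y ∈ S, Nat.testBit x i = true ∧ Nat.testBit y i = false} := by
  refine ⟨S.sup id, ?_⟩
  rintro i ⟨x, hx, -, -, hxi, -⟩
  have h1 : 2 ^ i ≤ x := Nat.ge_two_pow_of_testBit hxi
  have h2 : i < 2 ^ i := Nat.lt_two_pow_self
  have h3 : x ≤ S.sup id := Finset.le_sup (f := id) hx
  omega

/-- For a set with at least two elements, the supremum defining `splitIdx` is attained, so both
parts of the splitting partition are nonempty. -/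
lemma parts_nonempty {S : Finset ℕ} (hS : 2 ≤ S.card) :
    (lowerPart S).Nonempty ∧ (upperPart S).Nonempty := by
  obtain ⟨x, hx, y, hy, hxy⟩ := Finset.one_lt_card.mp hS
  have hne : {i | ∃ x ∈ S, ∃ y ∈ S,
      Nat.testBit x i = true ∧ Nat.testBit y i = false}.Nonempty := by
    obtain ⟨i, hi⟩ := Nat.exists_testBit_ne_of_ne hxy
    cases hxi : Nat.testBit x i <;> cases hyi : Nat.testBit y i
    · simp_all
    · exact ⟨i, y, hy, x, hx, hyi, hxi⟩
    · exact ⟨i, x, hx, y, hy, hxi, hyi⟩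
    · simp_all
  obtain ⟨a, ha, b, hb, hai, hbi⟩ := Nat.sSup_mem hne (bddAbove_splitting S)
  exact ⟨⟨b, Finset.mem_filter.mpr ⟨hb, hbi⟩⟩, ⟨a, Finset.mem_filter.mpr ⟨ha, hai⟩⟩⟩

lemma card_parts (S : Finset ℕ) : (lowerPart S).card + (upperPart S).card = S.card := by
  have h := Finset.card_filter_add_card_filter_not (s := S)
    (fun x => Nat.testBit x (splitIdx S) = false)
  simpa [lowerPart, upperPart] using h

lemma splitIdx_eq_of_subset {S T : Finset ℕ} (hTS : T ⊆ S) {x y : ℕ} (hx : x ∈ T) (hy : y ∈ T)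
    (hxS : x ∈ upperPart S) (hyS : y ∈ lowerPart S) : splitIdx T = splitIdx S := by
  have hmem : splitIdx S ∈
      {i | ∃ x ∈ T, ∃ y ∈ T, Nat.testBit x i = true ∧ Nat.testBit y i = false} :=
    ⟨x, hx, y, hy, (Finset.mem_filter.mp hxS).2, (Finset.mem_filter.mp hyS).2⟩
  refine le_antisymm (csSup_le_csSup (bddAbove_splitting S) ⟨_, hmem⟩ ?_)
    (le_csSup (bddAbove_splitting T) hmem)
  rintro i ⟨a, ha, b, hb, h⟩
  exact ⟨a, hTS ha, b, hTS hb, h⟩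

/-- A subset assembled from nonempty pieces of the two parts of `S` has exactly these pieces as its
splitting partition. -/
lemma parts_union {S A B : Finset ℕ} (hA : A ⊆ lowerPart S) (hB : B ⊆ upperPart S)
    (hA' : A.Nonempty) (hB' : B.Nonempty) :
    lowerPart (A ∪ B) = A ∧ upperPart (A ∪ B) = B := by
  obtain ⟨y, hy⟩ := hA'
  obtain ⟨x, hx⟩ := hB'
  have hsub : A ∪ B ⊆ S := Finset.union_subset (hA.trans (Finset.filter_subset _ _))
    (hB.trans (Finset.filter_subset _ _))
  have hidx : splitIdx (A ∪ B) = splitIdx S :=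
    splitIdx_eq_of_subset hsub (Finset.mem_union_right _ hx) (Finset.mem_union_left _ hy)
      (hB hx) (hA hy)
  have hAbit : ∀ a ∈ A, Nat.testBit a (splitIdx S) = false :=
    fun a ha => (Finset.mem_filter.mp (hA ha)).2
  have hBbit : ∀ b ∈ B, Nat.testBit b (splitIdx S) = true :=
    fun b hb => (Finset.mem_filter.mp (hB hb)).2
  constructor
  · ext z
    simp only [lowerPart, hidx, Finset.mem_filter, Finset.mem_union]
    grind
  · ext z
    simp only [upperPart, hidx, Finset.mem_filter, Finset.mem_union]
    grind

lemma isCaterpillar_of_card_le_two {S : Finset ℕ} (hS : S.card ≤ 2) : IsCaterpillar S := by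
  by_cases h : S.card ≤ 1
  · exact .small S h
  · obtain ⟨h0, h1⟩ := parts_nonempty (S := S) (by omega)
    have := card_parts S
    have := h0.card_pos
    have := h1.card_pos
    exact .left S (by omega) (by omega) (.small _ (by omega))

lemma isCaterpillar_of_card_le_three {S : Finset ℕ} (hS : S.card ≤ 3) : IsCaterpillar S := by
  by_cases h : S.card ≤ 1
  · exact .small S h
  · obtain ⟨h0, h1⟩ := parts_nonempty (S := S) (by omega)
    have := card_parts S
    have := h0.card_pos
    have := h1.card_pos
    by_cases h01 : (lowerPart S).card = 1
    · exact .left S (by omega) h01 (isCaterpillar_of_card_le_two (by omega))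
    · exact .right S (by omega) (by omega) (isCaterpillar_of_card_le_two (by omega))

theorem stmt_12 (S : Finset ℕ) (hS : S.card = 5) :
    ∃ T ⊆ S, T.card = 4 ∧ IsCaterpillar T := by
  obtain ⟨h0, h1⟩ := parts_nonempty (S := S) (by omega)
  have hcard := card_parts S
  -- It suffices to pick pieces of the two parts of sizes `3` and `1`, in either order.
  have key : ∀ m n, m + n = 4 → (m = 1 ∨ n = 1) → m ≤ (lowerPart S).card →
      n ≤ (upperPart S).card → 0 < m → 0 < n → ∃ T ⊆ S, T.card = 4 ∧ IsCaterpillar T := by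
    intro m n hmn hone hm hn hm0 hn0
    obtain ⟨A, hA, hAc⟩ := Finset.exists_subset_card_eq hm
    obtain ⟨B, hB, hBc⟩ := Finset.exists_subset_card_eq hn
    obtain ⟨hl, hu⟩ := parts_union hA hB (Finset.card_pos.mp (by omega))
      (Finset.card_pos.mp (by omega))
    have hT := card_parts (A ∪ B)
    rw [hl, hu] at hT
    refine ⟨A ∪ B, Finset.union_subset (hA.trans (Finset.filter_subset _ _))
      (hB.trans (Finset.filter_subset _ _)), by omega, ?_⟩
    rcases hone with h | h
    · exact .left _ (by omega) (by rw [hl]; omega)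
        (isCaterpillar_of_card_le_three (by rw [hu]; omega))
    · exact .right _ (by omega) (by rw [hu]; omega)
        (isCaterpillar_of_card_le_three (by rw [hl]; omega))
  have := h0.card_pos
  have := h1.card_pos
  by_cases h : 3 ≤ (lowerPart S).card
  · exact key 3 1 (by omega) (by omega) h (by omega) (by omega) (by omega)
  · exact key 1 3 (by omega) (by omega) (by omega) (by omega) (by omega) (by omega)
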